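/- arXiv:1505.02332 — 3 statements merged into one kernel-verified Lean document; each statement's English description precedes it below -/
import Mathlib

section
/- For every index i with 1 ≤ i ≤ d and every polynomial q ∈ Q₁, the integral ∫_K (3(x_i − c_i)² − h_i²)·q(x) dx equals 0. -/
open MvPolynomial MeasureTheory

/-- `Q₁`: the span of the monomials `x^α` with `α i ≤ 1` for every `i`. -/
noncomputable def Q1 (d : ℕ) : Submodule ℝ (MvPolynomial (Fin d) ℝ) :=
  Submodule.span ℝ {p | ∃ α : Fin d →₀ ℕ, (∀ i, α i ≤ 1) ∧ p = monomial α (1 : ℝ)}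

/-- The Adini shape function space `P_A = Q₁ + span{x_i² q : 1 ≤ i ≤ d, q ∈ Q₁}`. -/
noncomputable def PA (d : ℕ) : Submodule ℝ (MvPolynomial (Fin d) ℝ) :=
  Q1 d ⊔ Submodule.span ℝ {p | ∃ i : Fin d, ∃ q ∈ Q1 d, p = X i ^ 2 * q}

/-- `Q₁^i`: elements of `Q₁` of degree 0 in `x_i`. -/
noncomputable def Q1i (d : ℕ) (i : Fin d) : Submodule ℝ (MvPolynomial (Fin d) ℝ) :=
  Submodule.span ℝ
    {p | ∃ α : Fin d →₀ ℕ, (∀ j, α j ≤ 1) ∧ α i = 0 ∧ p = monomial α (1 : ℝ)}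

/-- `S^i = span{((x_j − c_j)² − h_j²) q̂ : 1 ≤ j ≤ d, q̂ ∈ Q₁^i}`. -/
noncomputable def Si (d : ℕ) (c h : Fin d → ℝ) (i : Fin d) :
    Submodule ℝ (MvPolynomial (Fin d) ℝ) :=
  Submodule.span ℝ
    {p | ∃ j : Fin d, ∃ q ∈ Q1i d i, p = ((X j - C (c j)) ^ 2 - C (h j ^ 2)) * q}

/-- The vertices of the `d`-rectangle with centre `c` and half-lengths `h`. -/
def IsVertex {d : ℕ} (c h : Fin d → ℝ) (a : Fin d → ℝ) : Prop :=
  ∀ i, a i = c i - h i ∨ a i = c i + h i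

/-- The `d`-rectangle `K = ∏_i [c_i − h_i, c_i + h_i]`. -/
def box {d : ℕ} (c h : Fin d → ℝ) : Set (Fin d → ℝ) :=
  Set.univ.pi fun i => Set.Icc (c i - h i) (c i + h i)

/-- The iterated partial derivative `∂^α`. -/
noncomputable def pderivPow {d : ℕ} (α : Fin d → ℕ) :
    MvPolynomial (Fin d) ℝ →ₗ[ℝ] MvPolynomial (Fin d) ℝ :=
  (List.ofFn fun i : Fin d =>
    ((pderiv (R := ℝ) i).toLinearMap :
        Module.End ℝ (MvPolynomial (Fin d) ℝ)) ^ α i).prod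

/-! Up to scale, `3 (t - c) ^ 2 - h ^ 2` is the second Legendre polynomial on
`[c - h, c + h]`, so it is orthogonal to affine functions there. On a product domain the integral of
`f (x i)` times a monomial factors over the coordinates, and when `q` has degree at most one in
`x i` the `i`-th factor vanishes for each monomial of `q`. -/

section ProductDomain

variable {ι : Type*} [Fintype ι]

theorem integral_pi_comp_mul_prod_eq_zero {𝕜 : Type*} [RCLike 𝕜] {E : ι → Type*}
    [∀ j, MeasurableSpace (E j)] {μ : ∀ j, Measure (E j)} [∀ j, SigmaFinite (μ j)] {i : ι}
    {f : E i → 𝕜} {g : ∀ j, E j → 𝕜} (hfg : ∫ t, f t * g i t ∂μ i = 0) :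
    ∫ x, f (x i) * ∏ j, g j (x j) ∂Measure.pi μ = 0 := by
  classical
  let G := Function.update g i (f * g i)
  have prod_eq (x : ∀ j, E j) : f (x i) * ∏ j, g j (x j) = ∏ j, G j (x j) := by
    have prod_compl_eq : ∏ j ∈ {i}ᶜ, G j (x j) = ∏ j ∈ {i}ᶜ, g j (x j) :=
      Finset.prod_congr rfl fun j hj ↦ by simp_all [G]
    rw [Fintype.prod_eq_mul_prod_compl i, Fintype.prod_eq_mul_prod_compl i fun j ↦ G j (x j),
      prod_compl_eq, ← mul_assoc]
    simp [G]
  simp_rw [prod_eq, integral_fintype_prod_eq_prod]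
  exact Finset.prod_eq_zero (Finset.mem_univ i) (by simpa [G] using hfg)

theorem setIntegral_pi_comp_mul_eval_eq_zero {μ : ι → Measure ℝ}
    [∀ j, IsLocallyFiniteMeasure (μ j)] {s : ι → Set ℝ} (hs : ∀ j, IsCompact (s j)) {i : ι}
    {f : ℝ → ℝ} (hf : ContinuousOn f (s i)) {q : MvPolynomial ι ℝ}
    (hfq : ∀ k ≤ q.degreeOf i, ∫ t in s i, f t * t ^ k ∂μ i = 0) :
    ∫ x in Set.univ.pi s, f (x i) * eval x q ∂Measure.pi μ = 0 := by
  have integrableOn_term (α : ι →₀ ℕ) : IntegrableOn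
      (fun x ↦ q.coeff α * (f (x i) * ∏ j, x j ^ α j)) (Set.univ.pi s) (Measure.pi μ) := by
    have hfi : ContinuousOn (fun x : ι → ℝ ↦ f (x i)) (Set.univ.pi s) :=
      hf.comp (continuous_apply i).continuousOn fun x hx ↦ hx i (Set.mem_univ i)
    exact ContinuousOn.integrableOn_compact (isCompact_univ_pi hs)
      (continuousOn_const.mul (hfi.mul (by fun_prop)))
  simp_rw [eval_eq', Finset.mul_sum, mul_left_comm (f _)]
  rw [integral_finsetSum _ fun α _ ↦ integrableOn_term α]
  refine Finset.sum_eq_zero fun α hα ↦ ?_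
  rw [integral_const_mul, Measure.restrict_pi_pi,
    integral_pi_comp_mul_prod_eq_zero (g := fun j t ↦ t ^ α j)
      (hfq (α i) (degreeOf_le_iff.mp le_rfl α hα)), mul_zero]

end ProductDomain

theorem intervalIntegral_neg_self_eq_zero_of_odd {E : Type*} [NormedAddCommGroup E]
    [NormedSpace ℝ E] {f : ℝ → E} (hf : f.Odd) (a : ℝ) : ∫ u in -a..a, f u = 0 := by
  have integral_eq_neg : ∫ u in -a..a, f u = -∫ u in -a..a, f u := by
    calc ∫ u in -a..a, f u
      _ = ∫ u in -a..a, f (-u) := by rw [intervalIntegral.integral_comp_neg, neg_neg]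
      _ = -∫ u in -a..a, f u := by simp_rw [hf _, intervalIntegral.integral_neg]
  have := IsAddTorsionFree.of_isTorsionFree ℝ E
  exact self_eq_neg.mp integral_eq_neg

theorem intervalIntegral_three_mul_sq_sub_sq_mul_pow_eq_zero (c h : ℝ) {k : ℕ} (hk : k ≤ 1) :
    ∫ t in (c - h)..(c + h), (3 * (t - c) ^ 2 - h ^ 2) * t ^ k = 0 := by
  have recenter : ∫ t in (c - h)..(c + h), (3 * (t - c) ^ 2 - h ^ 2) * t ^ k =
      ∫ u in -h..h, (3 * u ^ 2 - h ^ 2) * (u + c) ^ k := by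
    simpa using intervalIntegral.integral_comp_sub_right
      (a := c - h) (b := c + h) (fun u ↦ (3 * u ^ 2 - h ^ 2) * (u + c) ^ k) c
  have integral_legendre : ∫ u in -h..h, (3 * u ^ 2 - h ^ 2) = 0 := by
    rw [intervalIntegral.integral_sub (by simp) (by simp), intervalIntegral.integral_const_mul,
      integral_pow, intervalIntegral.integral_const, smul_eq_mul]
    push_cast
    ring
  have integral_legendre_mul_id : ∫ u in -h..h, (3 * u ^ 2 - h ^ 2) * u = 0 :=
    intervalIntegral_neg_self_eq_zero_of_odd (fun u ↦ by ring) h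
  rw [recenter]
  interval_cases k
  · simpa only [pow_zero, mul_one] using integral_legendre
  · simp_rw [pow_one, mul_add]
    rw [intervalIntegral.integral_add, intervalIntegral.integral_mul_const, integral_legendre,
      integral_legendre_mul_id, zero_mul, add_zero] <;>
    exact Continuous.intervalIntegrable (by fun_prop) _ _

theorem Q1_eq_restrictDegree (d : ℕ) : Q1 d = restrictDegree (Fin d) ℝ 1 := by
  rw [restrictDegree, restrictSupport_eq_span, Q1]
  congr 1
  ext p
  simp [eq_comm]

theorem degreeOf_le_one_of_mem_Q1 {d : ℕ} {q : MvPolynomial (Fin d) ℝ} (hq : q ∈ Q1 d)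
    (i : Fin d) : q.degreeOf i ≤ 1 := by
  rw [Q1_eq_restrictDegree, mem_restrictDegree] at hq
  exact degreeOf_le_iff.mpr fun α hα ↦ hq α hα i

theorem integral_orthogonality_general {ι : Type*} [Fintype ι] {s : ι → Set ℝ}
    (hs : ∀ j, IsCompact (s j)) {i : ι} {c h : ℝ} (hh : 0 ≤ h)
    (hsi : s i = Set.Icc (c - h) (c + h)) {q : MvPolynomial ι ℝ} (hq : q.degreeOf i ≤ 1) :
    ∫ x in Set.univ.pi s, eval x ((3 * (X i - C c) ^ 2 - C (h ^ 2)) * q) = 0 := by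
  have moments_eq_zero : ∀ k ≤ q.degreeOf i,
      ∫ t in s i, (3 * (t - c) ^ 2 - h ^ 2) * t ^ k = 0 := fun k hk ↦ by
    rw [hsi, integral_Icc_eq_integral_Ioc, ← intervalIntegral.integral_of_le (by linarith)]
    exact intervalIntegral_three_mul_sq_sub_sq_mul_pow_eq_zero c h (hk.trans hq)
  simpa [volume_pi] using
    setIntegral_pi_comp_mul_eval_eq_zero hs
      (f := fun t ↦ 3 * (t - c) ^ 2 - h ^ 2) (by fun_prop) moments_eq_zero

/-- for every `i` and every `q ∈ Q₁`,
`∫_K (3(x_i − c_i)² − h_i²) q(x) dx = 0`. -/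
theorem integral_orthogonality (d : ℕ) (hd : 1 ≤ d)
    (c h : Fin d → ℝ) (hh : ∀ i, 0 < h i) (i : Fin d)
    (q : MvPolynomial (Fin d) ℝ) (hq : q ∈ Q1 d) :
    ∫ x in box c h, eval x ((3 * (X i - C (c i)) ^ 2 - C (h i ^ 2)) * q) = 0 :=
  integral_orthogonality_general (c := c i) (s := fun j ↦ Set.Icc (c j - h j) (c j + h j))
    (fun _ ↦ isCompact_Icc) (hh i).le rfl (degreeOf_le_one_of_mem_Q1 hq i)
end

section
/- (Two-dimensional face expansion) Let d = 2, so K = [c_1 − h_1, c_1 + h_1] × [c_2 − h_2, c_2 + h_2]. Let w ∈ P_A and let q ∈ Q₁ agree with ∂w/∂x_1 at all four vertices of K. Then for either sign ± and every x_2 ∈ ℝ, (∂w/∂x_1 − q)(c_1 ± h_1, x_2) = (1/2)·((x_2 − c_2)² − h_2²)·( (1/|K|) ∫_K ∂³w/∂x_1∂x_2² dx ) + (1/6)·((x_2 − c_2)³ − h_2²(x_2 − c_2))·∂⁴w/∂x_1∂x_2³, where |K| = 4h_1h_2 and ∂⁴w/∂x_1∂x_2³ is a constant. -/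
open MvPolynomial MeasureTheory

/-! Along a line in direction `x_j` the error `∂_i w - q` is a cubic polynomial, because `∂_j²`
maps `P_A` into `Q₁` and annihilates `Q₁`. Taylor's formula at the midpoint of an edge, together
with the vanishing at its two endpoints, expresses this cubic through `∂_i ∂_j² w` at the midpoint
and `∂_i ∂_j³ w`. In two dimensions `∂₁∂₂³ w` is constant, while `∂₁∂₂² w` lies in `Q₁` and does
not depend on `x₁`: its value at the midpoint of the edge is its value at the centre of `K`, which
is its mean over `K` because the midpoint rule is exact on `Q₁`. -/

section RestrictLine

variable {σ R : Type*} [DecidableEq σ] [CommSemiring R]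

/-- The restriction of a multivariate polynomial to the line through `a` in direction `x_j`, as a
univariate polynomial in the coordinate `x_j` itself (so `a` corresponds to the parameter `a j`). -/
noncomputable def restrictLine (a : σ → R) (j : σ) :
    MvPolynomial σ R →ₐ[R] Polynomial R :=
  aeval (Function.update (fun i => Polynomial.C (a i)) j Polynomial.X)

theorem eval_restrictLine (a : σ → R) (j : σ) (f : MvPolynomial σ R) (y : R) :
    (restrictLine a j f).eval y = eval (Function.update a j y) f := by
  induction f using MvPolynomial.induction_on with
  | C r => simp [restrictLine]
  | add p q hp hq => simp [hp, hq]
  | mul_X p i hp =>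
    have hX : (restrictLine a j (X i)).eval y = Function.update a j y i := by
      rcases eq_or_ne i j with rfl | hij
      · simp [restrictLine]
      · simp [restrictLine, hij]
    rw [map_mul, Polynomial.eval_mul, hp, hX, eval_mul, eval_X]

theorem derivative_restrictLine (a : σ → R) (j : σ) (f : MvPolynomial σ R) :
    (restrictLine a j f).derivative = restrictLine a j (pderiv j f) := by
  induction f using MvPolynomial.induction_on with
  | C r => simp [restrictLine]
  | add p q hp hq => simp [hp, hq]
  | mul_X p i hp =>
    have hX : (restrictLine a j (X i)).derivative = restrictLine a j (pderiv j (X i)) := by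
      rcases eq_or_ne i j with rfl | hij
      · simp [restrictLine]
      · simp [restrictLine, hij]
    simp only [map_mul, Polynomial.derivative_mul, hp, hX, pderiv_mul, map_add]

theorem iterate_derivative_restrictLine (a : σ → R) (j : σ) (k : ℕ)
    (f : MvPolynomial σ R) :
    Polynomial.derivative^[k] (restrictLine a j f) = restrictLine a j ((pderiv j)^[k] f) :=
  ((Function.Semiconj.iterate_right
    (fun g => (derivative_restrictLine a j g).symm : Function.Semiconj _ _ _) k) f).symm

end RestrictLine

section Taylor

variable {σ K : Type*} [DecidableEq σ] [Field K] [CharZero K]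

theorem coeff_taylor_eq_eval_iterate_derivative_div (p : Polynomial K) (c : K) (k : ℕ) :
    (Polynomial.taylor c p).coeff k =
      (Polynomial.derivative^[k] p).eval c / (k.factorial : K) := by
  rw [Polynomial.taylor_coeff, ← Polynomial.factorial_smul_hasseDeriv, LinearMap.smul_apply,
    Polynomial.eval_smul, nsmul_eq_mul,
    mul_div_cancel_left₀ _ (Nat.cast_ne_zero.2 k.factorial_ne_zero)]

theorem eval_eq_sum_eval_iterate_derivative {p : Polynomial K} {n : ℕ}
    (hp : Polynomial.derivative^[n + 1] p = 0) (c y : K) :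
    p.eval y = ∑ k ∈ Finset.range (n + 1),
      (Polynomial.derivative^[k] p).eval c / (k.factorial : K) * (y - c) ^ k := by
  have hdeg : (Polynomial.taylor c p).natDegree ≤ n := by
    refine Polynomial.natDegree_le_iff_coeff_eq_zero.2 fun k hk => ?_
    obtain ⟨m, rfl⟩ := Nat.exists_eq_add_of_le' (Nat.succ_le_of_lt hk)
    rw [coeff_taylor_eq_eval_iterate_derivative_div, Function.iterate_add_apply, hp]
    simp
  rw [← Polynomial.taylor_eval_sub c, Polynomial.eval_eq_sum_range' (Nat.lt_succ_of_le hdeg)]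
  simp only [coeff_taylor_eq_eval_iterate_derivative_div]

theorem eval_update_eq_sum_eval_iterate_pderiv {f : MvPolynomial σ K} {j : σ} {n : ℕ}
    (hf : (pderiv j)^[n + 1] f = 0) (a : σ → K) (y : K) :
    eval (Function.update a j y) f = ∑ k ∈ Finset.range (n + 1),
      eval a ((pderiv j)^[k] f) / (k.factorial : K) * (y - a j) ^ k := by
  have hline : Polynomial.derivative^[n + 1] (restrictLine a j f) = 0 := by
    rw [iterate_derivative_restrictLine, hf, map_zero]
  rw [← eval_restrictLine, eval_eq_sum_eval_iterate_derivative hline (a j) y]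
  simp only [iterate_derivative_restrictLine, eval_restrictLine, Function.update_eq_self]

theorem eval_update_of_pderiv_eq_zero {f : MvPolynomial σ K} {j : σ} (hf : pderiv j f = 0)
    (a : σ → K) (y : K) : eval (Function.update a j y) f = eval a f := by
  simpa using eval_update_eq_sum_eval_iterate_pderiv (n := 0) hf a y

theorem eval_update_eq_of_eval_endpoints_eq_zero {f : MvPolynomial σ K} {j : σ}
    (hf : (pderiv j)^[4] f = 0) (a : σ → K) {h : K} (hh : h ≠ 0)
    (hleft : eval (Function.update a j (a j - h)) f = 0)
    (hright : eval (Function.update a j (a j + h)) f = 0) (y : K) :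
    eval (Function.update a j y) f =
      1 / 2 * ((y - a j) ^ 2 - h ^ 2) * eval a (pderiv j (pderiv j f)) +
      1 / 6 * ((y - a j) ^ 3 - h ^ 2 * (y - a j)) *
        eval a (pderiv j (pderiv j (pderiv j f))) := by
  have taylor (t : K) : eval (Function.update a j t) f =
      eval a f + eval a (pderiv j f) * (t - a j) +
        eval a (pderiv j (pderiv j f)) / 2 * (t - a j) ^ 2 +
        eval a (pderiv j (pderiv j (pderiv j f))) / 6 * (t - a j) ^ 3 := by
    rw [eval_update_eq_sum_eval_iterate_pderiv hf]
    simp [Finset.sum_range_succ, Nat.factorial]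
  rw [taylor] at hleft hright ⊢
  have value : eval a f = -(h ^ 2 / 2 * eval a (pderiv j (pderiv j f))) := by
    linear_combination (hleft + hright) / 2
  have slope : eval a (pderiv j f) =
      -(h ^ 2 / 6 * eval a (pderiv j (pderiv j (pderiv j f)))) := by
    apply mul_left_cancel₀ hh
    linear_combination (hright - hleft) / 2
  rw [value, slope]
  ring

end Taylor

section PartialDerivatives

variable {σ R : Type*}

theorem pderiv_pderiv_comm [CommSemiring R] (i j : σ) (f : MvPolynomial σ R) :
    pderiv i (pderiv j f) = pderiv j (pderiv i f) := by
  rcases eq_or_ne i j with rfl | hij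
  · rfl
  · ext m
    simp only [coeff_pderiv, Finsupp.add_apply, Finsupp.single_eq_of_ne hij,
      Finsupp.single_eq_of_ne hij.symm, add_zero, add_right_comm m, mul_right_comm]

theorem eq_C_of_forall_pderiv_eq_zero [CommSemiring R] [NoZeroDivisors R] [CharZero R]
    {f : MvPolynomial σ R} (hf : ∀ i, pderiv i f = 0) : f = C (coeff 0 f) := by
  classical
  ext m
  rw [coeff_C]
  split_ifs with hm
  · rw [hm]
  · obtain ⟨i, hi⟩ := Finsupp.ne_iff.1 (Ne.symm hm)
    have hcoeff := coeff_pderiv (i := i) f (m - Finsupp.single i 1)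
    rw [hf, coeff_zero, Finsupp.sub_add_single_one_cancel hi] at hcoeff
    exact (mul_eq_zero.1 hcoeff.symm).resolve_right (Nat.cast_add_one_ne_zero _)

end PartialDerivatives

section ShapeFunctions

variable {d : ℕ} {q w : MvPolynomial (Fin d) ℝ}

theorem monomial_mem_Q1 {α : Fin d →₀ ℕ} (hα : ∀ i, α i ≤ 1) (r : ℝ) : monomial α r ∈ Q1 d := by
  have hsmul : monomial α r = r • monomial α (1 : ℝ) := by rw [smul_monomial, smul_eq_mul, mul_one]
  exact hsmul ▸ Submodule.smul_mem _ r (Submodule.subset_span ⟨α, hα, rfl⟩)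

theorem Q1_le_iff {S : Submodule ℝ (MvPolynomial (Fin d) ℝ)} :
    Q1 d ≤ S ↔ ∀ α : Fin d →₀ ℕ, (∀ i, α i ≤ 1) → monomial α (1 : ℝ) ∈ S :=
  Submodule.span_le.trans
    ⟨fun hS α hα => hS ⟨α, hα, rfl⟩, by rintro hS _ ⟨α, hα, rfl⟩; exact hS α hα⟩

theorem pderiv_mem_Q1 (i : Fin d) (hq : q ∈ Q1 d) : pderiv i q ∈ Q1 d := by
  suffices hle : Q1 d ≤ (Q1 d).comap (pderiv i).toLinearMap from hle hq
  refine Q1_le_iff.2 fun α hα => ?_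
  rw [Submodule.mem_comap, Derivation.coeFn_coe, pderiv_monomial]
  exact monomial_mem_Q1 (fun j => (Nat.sub_le _ _).trans (hα j)) _

theorem X_mul_pderiv_mem_Q1 (i : Fin d) (hq : q ∈ Q1 d) : X i * pderiv i q ∈ Q1 d := by
  suffices hle : Q1 d ≤ (Q1 d).comap (LinearMap.mulLeft ℝ (X i) ∘ₗ (pderiv i).toLinearMap) from
    hle hq
  refine Q1_le_iff.2 fun α hα => ?_
  change X i * pderiv i (monomial α (1 : ℝ)) ∈ Q1 d
  rw [X_mul_pderiv_monomial]
  exact nsmul_mem (monomial_mem_Q1 hα 1) _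

theorem pderiv_pderiv_eq_zero_of_mem_Q1 (i : Fin d) (hq : q ∈ Q1 d) :
    pderiv i (pderiv i q) = 0 := by
  suffices hle : Q1 d ≤ LinearMap.ker ((pderiv i).toLinearMap ∘ₗ (pderiv i).toLinearMap) from
    hle hq
  refine Q1_le_iff.2 fun α hα => ?_
  change pderiv i (pderiv i (monomial α (1 : ℝ))) = 0
  have hexponent : α i - 1 = 0 := Nat.sub_eq_zero_of_le (hα i)
  simp [hexponent]

theorem pderiv_pderiv_X_sq_mul_mem_Q1 (i j : Fin d) (hq : q ∈ Q1 d) :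
    pderiv j (pderiv j (X i ^ 2 * q)) ∈ Q1 d := by
  have hq'' := pderiv_pderiv_eq_zero_of_mem_Q1 j hq
  rcases eq_or_ne i j with rfl | hij
  · have hleibniz : pderiv i (pderiv i (X i ^ 2 * q)) =
        2 • q + 4 • (X i * pderiv i q) := by
      simp only [pow_two, pderiv_mul, pderiv_X_self, map_add, one_mul, mul_one, hq'',
        mul_zero, nsmul_eq_mul, Nat.cast_ofNat]
      ring
    rw [hleibniz]
    exact add_mem (nsmul_mem hq 2) (nsmul_mem (X_mul_pderiv_mem_Q1 i hq) 4)
  · simp [pderiv_X_of_ne hij, hq'']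

theorem pderiv_pderiv_mem_Q1_of_mem_PA (j : Fin d) (hw : w ∈ PA d) :
    pderiv j (pderiv j w) ∈ Q1 d := by
  suffices hle : PA d ≤
      (Q1 d).comap ((pderiv j).toLinearMap ∘ₗ (pderiv j).toLinearMap) from hle hw
  refine sup_le (fun q hq => pderiv_mem_Q1 j (pderiv_mem_Q1 j hq)) (Submodule.span_le.2 ?_)
  rintro _ ⟨i, q, hq, rfl⟩
  exact pderiv_pderiv_X_sq_mul_mem_Q1 i j hq

theorem pderiv_pderiv_pderiv_sub_of_mem_Q1 (i j : Fin d) (w : MvPolynomial (Fin d) ℝ)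
    (hq : q ∈ Q1 d) :
    pderiv j (pderiv j (pderiv i w - q)) = pderiv i (pderiv j (pderiv j w)) := by
  rw [map_sub, map_sub, pderiv_pderiv_eq_zero_of_mem_Q1 j hq, sub_zero, pderiv_pderiv_comm j i w,
    pderiv_pderiv_comm j i]

theorem eval_update_pderiv_sub_of_mem_PA (i j : Fin d) (hw : w ∈ PA d) (hq : q ∈ Q1 d)
    (a : Fin d → ℝ) {h : ℝ} (hh : h ≠ 0)
    (hleft : eval (Function.update a j (a j - h)) q =
      eval (Function.update a j (a j - h)) (pderiv i w))
    (hright : eval (Function.update a j (a j + h)) q =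
      eval (Function.update a j (a j + h)) (pderiv i w)) (y : ℝ) :
    eval (Function.update a j y) (pderiv i w - q) =
      1 / 2 * ((y - a j) ^ 2 - h ^ 2) * eval a (pderiv i (pderiv j (pderiv j w))) +
      1 / 6 * ((y - a j) ^ 3 - h ^ 2 * (y - a j)) *
        eval a (pderiv i (pderiv j (pderiv j (pderiv j w)))) := by
  have hsecond := pderiv_pderiv_pderiv_sub_of_mem_Q1 i j w hq
  have hfourth : (pderiv j)^[4] (pderiv i w - q) = 0 := by
    change pderiv j (pderiv j (pderiv j (pderiv j (pderiv i w - q)))) = 0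
    rw [hsecond]
    exact pderiv_pderiv_eq_zero_of_mem_Q1 j
      (pderiv_mem_Q1 i (pderiv_pderiv_mem_Q1_of_mem_PA j hw))
  rw [eval_update_eq_of_eval_endpoints_eq_zero hfourth a hh
    (by rw [eval_sub, hleft, sub_self]) (by rw [eval_sub, hright, sub_self]) y, hsecond,
    pderiv_pderiv_comm j i]

theorem exists_pderiv_pderiv_eq_C_of_mem_Q1_two {q : MvPolynomial (Fin 2) ℝ} (hq : q ∈ Q1 2) :
    ∃ D : ℝ, pderiv 0 (pderiv 1 q) = C D := by
  refine ⟨_, eq_C_of_forall_pderiv_eq_zero (Fin.forall_fin_two.2 ⟨?_, ?_⟩)⟩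
  · exact pderiv_pderiv_eq_zero_of_mem_Q1 0 (pderiv_mem_Q1 1 hq)
  · rw [pderiv_pderiv_comm 1 0, pderiv_pderiv_eq_zero_of_mem_Q1 1 hq, map_zero]

end ShapeFunctions

section MidpointRule

theorem integral_Icc_pow_of_le_one (c : ℝ) {h : ℝ} (hh : 0 ≤ h) {n : ℕ} (hn : n ≤ 1) :
    ∫ y in Set.Icc (c - h) (c + h), y ^ n = 2 * h * c ^ n := by
  rw [integral_Icc_eq_integral_Ioc, ← intervalIntegral.integral_of_le (by linarith)]
  interval_cases n
  · norm_num [two_mul]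
  · simp only [pow_one, integral_id]
    ring

variable {d : ℕ} {c h : Fin d → ℝ}

theorem integrableOn_box_eval (p : MvPolynomial (Fin d) ℝ) :
    IntegrableOn (fun x => eval x p) (box c h) :=
  (continuous_eval p).continuousOn.integrableOn_compact (isCompact_univ_pi fun _ => isCompact_Icc)

theorem setIntegral_box_monomial (hh : ∀ i, 0 ≤ h i) {α : Fin d →₀ ℕ} (hα : ∀ i, α i ≤ 1) :
    ∫ x in box c h, eval x (monomial α 1) = (∏ i, 2 * h i) * eval c (monomial α 1) := by
  have heval (x : Fin d → ℝ) : eval x (monomial α 1) = ∏ i, x i ^ α i := by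
    rw [eval_monomial, one_mul, Finsupp.prod_fintype _ _ fun i => pow_zero _]
  simp only [heval, box]
  rw [volume_pi, Measure.restrict_pi_pi, integral_fintype_prod_eq_prod (fun i (y : ℝ) => y ^ α i),
    ← Finset.prod_mul_distrib]
  exact Finset.prod_congr rfl fun i _ => integral_Icc_pow_of_le_one (c i) (hh i) (hα i)

theorem setIntegral_box_eval_of_mem_Q1 (hh : ∀ i, 0 ≤ h i) {q : MvPolynomial (Fin d) ℝ}
    (hq : q ∈ Q1 d) : ∫ x in box c h, eval x q = (∏ i, 2 * h i) * eval c q := by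
  induction hq using Submodule.span_induction with
  | mem p hp =>
    obtain ⟨α, hα, rfl⟩ := hp
    exact setIntegral_box_monomial hh hα
  | zero => simp
  | add p r _ _ hp hr =>
    simp only [eval_add]
    rw [integral_add (integrableOn_box_eval p) (integrableOn_box_eval r), hp, hr, mul_add]
  | smul t p _ hp =>
    simp only [smul_eval]
    rw [integral_const_mul, hp, mul_left_comm]

end MidpointRule

/-- two-dimensional face expansion: for `d = 2`, `w ∈ P_A` and `q ∈ Q₁`
the vertex interpolant of `∂w/∂x₁`, on the faces `x₁ = c₁ ± h₁` one has
`(∂w/∂x₁ − q)(c₁ ± h₁, x₂) = (1/2)((x₂−c₂)² − h₂²)·avg_K(∂³w/∂x₁∂x₂²)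
+ (1/6)((x₂−c₂)³ − h₂²(x₂−c₂))·∂⁴w/∂x₁∂x₂³`, where `∂⁴w/∂x₁∂x₂³` is a constant. -/
theorem adini_face_expansion_2d (c h : Fin 2 → ℝ) (hh : ∀ i, 0 < h i)
    (w : MvPolynomial (Fin 2) ℝ) (hw : w ∈ PA 2)
    (q : MvPolynomial (Fin 2) ℝ) (hq : q ∈ Q1 2)
    (hagree : ∀ a : Fin 2 → ℝ, IsVertex c h a → eval a q = eval a (pderiv 0 w)) :
    ∃ D : ℝ, pderiv 0 (pderiv 1 (pderiv 1 (pderiv 1 w))) = C D ∧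
      ∀ s : ℝ, s = 1 ∨ s = -1 → ∀ x₂ : ℝ,
        eval ![c 0 + s * h 0, x₂] (pderiv 0 w - q) =
          (1 / 2) * ((x₂ - c 1) ^ 2 - h 1 ^ 2) *
            ((1 / (4 * h 0 * h 1)) *
              ∫ x in box c h, eval x (pderiv 0 (pderiv 1 (pderiv 1 w)))) +
          (1 / 6) * ((x₂ - c 1) ^ 3 - h 1 ^ 2 * (x₂ - c 1)) * D := by
  have hQ1 : pderiv 1 (pderiv 1 w) ∈ Q1 2 := pderiv_pderiv_mem_Q1_of_mem_PA 1 hw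
  obtain ⟨D, hD⟩ := exists_pderiv_pderiv_eq_C_of_mem_Q1_two hQ1
  refine ⟨D, hD, fun s hs x₂ => ?_⟩
  set midpoint := Function.update c 0 (c 0 + s * h 0)
  have hedge (y : ℝ) : Function.update midpoint 1 y = ![c 0 + s * h 0, y] := by
    ext i; fin_cases i <;> simp [midpoint]
  have hface : c 0 + s * h 0 = c 0 - h 0 ∨ c 0 + s * h 0 = c 0 + h 0 := by
    rcases hs with rfl | rfl
    · exact Or.inr (by ring)
    · exact Or.inl (by ring)
  have hmean : 1 / (4 * h 0 * h 1) * ∫ x in box c h, eval x (pderiv 0 (pderiv 1 (pderiv 1 w))) =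
      eval midpoint (pderiv 0 (pderiv 1 (pderiv 1 w))) := by
    rw [setIntegral_box_eval_of_mem_Q1 (fun i => (hh i).le) (pderiv_mem_Q1 0 hQ1),
      Fin.prod_univ_two,
      eval_update_of_pderiv_eq_zero (pderiv_pderiv_eq_zero_of_mem_Q1 0 hQ1)]
    field_simp [(hh 0).ne', (hh 1).ne']
    ring
  have hexpansion := eval_update_pderiv_sub_of_mem_PA 0 1 hw hq midpoint (hh 1).ne'
    (by rw [hedge]; exact hagree _ (Fin.forall_fin_two.2 ⟨hface, Or.inl rfl⟩))
    (by rw [hedge]; exact hagree _ (Fin.forall_fin_two.2 ⟨hface, Or.inr rfl⟩)) x₂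
  rwa [hedge, ← hmean, hD, eval_C] at hexpansion
end

section
/- (Remark 3.2, conclusion) Let d ≥ 2 and let u : ℝ^d → ℝ be a continuously differentiable function of the form u(x) = Σ_{1 ≤ i < j ≤ d} c_{ij}·x_i·x_j + Σ_{i=1}^d g_i(x_i), where c_{ij} are real constants and g_i : ℝ → ℝ are continuously differentiable. If u = 0 and ∇u = 0 at every point of the boundary of the unit cube [0,1]^d, then u vanishes identically on [0,1]^d. -/
/-!
When there are at least two coordinates, the part of a coordinate axis inside the cube lies in the
boundary. The quadratic part vanishes on the axes, so each `g i` is constant on `[0,1]` and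
`Σ i, g i (x i)` is zero on the whole cube. What remains is the quadratic part, whose value at the
vertex `e_i + e_j` with `i < j` is `c i j`; so all its coefficients vanish. Any set `S`
containing `0` and `1` can take the place of `[0,1]`.
-/

section Forms

variable {ι R : Type*} [Fintype ι] [LinearOrder ι] [NonUnitalNonAssocSemiring R]

/-- The quadratic form `Σ_{i < j} c i j * x i * x j` without square terms; the entries `c i j` with
`j ≤ i` are ignored. -/
def strictUpperForm (c : ι → ι → R) (x : ι → R) : R :=
  ∑ i, ∑ j, if i < j then c i j * x i * x j else 0

/-- A strictly upper triangular quadratic form plus a sum of one-variable functions: the shape of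
`u` in the theorem. -/
def specialForm (c : ι → ι → R) (g : ι → R → R) (x : ι → R) : R :=
  strictUpperForm c x + ∑ i, g i (x i)

theorem strictUpperForm_single (c : ι → ι → R) (a : ι) (t : R) :
    strictUpperForm c (Pi.single a t) = 0 := by
  refine Finset.sum_eq_zero fun i _ => Finset.sum_eq_zero fun j _ => ite_eq_right_iff.mpr ?_
  intro hij
  obtain hi | hj : i ≠ a ∨ j ≠ a := by grind
  · simp [hi]
  · simp [hj]

theorem strictUpperForm_single_add_single (c : ι → ι → R) {a b : ι} (hab : a < b) (s t : R) :
    strictUpperForm c (Pi.single a s + Pi.single b t) = c a b * s * t := by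
  have other_terms : ∀ i j, ¬(i = a ∧ j = b) →
      (if i < j then c i j * (Pi.single a s + Pi.single b t : ι → R) i *
        (Pi.single a s + Pi.single b t : ι → R) j else 0) = 0 := by
    intro i j hne
    refine ite_eq_right_iff.mpr fun hij => ?_
    obtain ⟨hia, hib⟩ | ⟨hja, hjb⟩ : (i ≠ a ∧ i ≠ b) ∨ (j ≠ a ∧ j ≠ b) := by grind
    · simp [hia, hib]
    · simp [hja, hjb]
  rw [strictUpperForm,
    Fintype.sum_eq_single a fun i hi =>
      Finset.sum_eq_zero fun j _ => other_terms i j fun h => hi h.1,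
    Fintype.sum_eq_single b fun j hj => other_terms a j fun h => hj h.2]
  simp [hab, hab.ne, hab.ne']

theorem strictUpperForm_eq_zero {c : ι → ι → R} (hc : ∀ i j, i < j → c i j = 0) (x : ι → R) :
    strictUpperForm c x = 0 :=
  Finset.sum_eq_zero fun i _ => Finset.sum_eq_zero fun j _ =>
    ite_eq_right_iff.mpr fun hij => by rw [hc i j hij, zero_mul, zero_mul]

end Forms

theorem sum_apply_single_sub_sum_apply_zero {ι R M : Type*} [Fintype ι] [DecidableEq ι] [Zero R]
    [AddCommGroup M] (g : ι → R → M) (a : ι) (t : R) :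
    ∑ i, g i (Pi.single (M := fun _ => R) a t i) - ∑ i, g i 0 = g a t - g a 0 := by
  rw [← Finset.sum_sub_distrib, Fintype.sum_eq_single a fun i hi => by simp [hi]]
  simp

section Membership

variable {ι R : Type*} [DecidableEq ι] {S : Set R}

theorem single_mem_univ_pi [Zero R] (h0 : 0 ∈ S) (a : ι) {t : R} (ht : t ∈ S) :
    Pi.single a t ∈ Set.univ.pi fun _ : ι => S :=
  Set.update_mem_pi_iff_of_mem (fun _ _ => h0) |>.mpr fun _ => ht

theorem single_add_single_mem_univ_pi [AddZeroClass R] (h0 : 0 ∈ S) {a b : ι} (hab : a ≠ b)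
    {s t : R} (hs : s ∈ S) (ht : t ∈ S) :
    Pi.single a s + Pi.single b t ∈ Set.univ.pi fun _ : ι => S := by
  intro i _
  obtain rfl | hi := eq_or_ne i b
  · simpa [hab.symm] using ht
  · simpa [hi] using single_mem_univ_pi h0 a hs i trivial

end Membership

section Vanishing

variable {ι R : Type*} [Fintype ι] [LinearOrder ι]

theorem sum_apply_eq_zero_of_specialForm_single_eq_zero [NonUnitalNonAssocRing R] [Nonempty ι]
    {c : ι → ι → R} {g : ι → R → R} {S : Set R} (h0 : 0 ∈ S)
    (haxis : ∀ a, ∀ t ∈ S, specialForm c g (Pi.single a t) = 0)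
    {x : ι → R} (hx : x ∈ Set.univ.pi fun _ => S) : ∑ i, g i (x i) = 0 := by
  have sum_axis : ∀ a, ∀ t ∈ S, ∑ i, g i (Pi.single (M := fun _ => R) a t i) = 0 := by
    intro a t ht
    simpa only [specialForm, strictUpperForm_single, zero_add] using haxis a t ht
  have sum_zero : ∑ i, g i 0 = 0 := by
    simpa using sum_axis (Classical.arbitrary ι) 0 h0
  have g_const : ∀ a, ∀ t ∈ S, g a t = g a 0 := by
    intro a t ht
    rw [← sub_eq_zero, ← sum_apply_single_sub_sum_apply_zero, sum_axis a t ht, sum_zero, sub_zero]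
  rw [← sum_zero]
  exact Finset.sum_congr rfl fun i _ => g_const i (x i) (hx i trivial)

theorem special_form_vanishing_on_cube_general [NonAssocRing R] [Nontrivial ι]
    {c : ι → ι → R} {g : ι → R → R} {S : Set R} (h0 : 0 ∈ S) (h1 : 1 ∈ S)
    (hb : ∀ x ∈ Set.univ.pi fun _ : ι => S, (∃ i, x i = 0 ∨ x i = 1) → specialForm c g x = 0) :
    ∀ x ∈ Set.univ.pi fun _ : ι => S, specialForm c g x = 0 := by
  have vanishes_on_axes : ∀ a, ∀ t ∈ S, specialForm c g (Pi.single a t) = 0 := by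
    intro a t ht
    obtain ⟨b, hba⟩ := exists_ne a
    exact hb _ (single_mem_univ_pi h0 a ht) ⟨b, .inl (by simp [hba])⟩
  have sum_g : ∀ x ∈ Set.univ.pi fun _ : ι => S, ∑ i, g i (x i) = 0 := fun _ hx =>
    sum_apply_eq_zero_of_specialForm_single_eq_zero h0 vanishes_on_axes hx
  have coeff_eq_zero : ∀ a b, a < b → c a b = 0 := by
    intro a b hab
    have hmem := single_add_single_mem_univ_pi h0 hab.ne h1 h1
    have hvertex := hb _ hmem ⟨a, .inr (by simp [hab.ne])⟩
    simpa only [specialForm, sum_g _ hmem, strictUpperForm_single_add_single c hab, mul_one,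
      add_zero] using hvertex
  intro x hx
  rw [specialForm, sum_g x hx, strictUpperForm_eq_zero coeff_eq_zero, add_zero]

end Vanishing

/-- Remark 3.2, conclusion: if `u(x) = Σ_{i<j} c_{ij} x_i x_j + Σ_i g_i(x_i)`
with the `g_i` continuously differentiable, and `u` and `∇u` vanish at every boundary
point of the unit cube `[0,1]^d` (`d ≥ 2`), then `u` vanishes identically on `[0,1]^d`. -/
theorem special_form_vanishing_on_cube (d : ℕ) (hd : 2 ≤ d)
    (cc : Fin d → Fin d → ℝ) (g : Fin d → ℝ → ℝ) (hg : ∀ i, ContDiff ℝ 1 (g i))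
    (u : (Fin d → ℝ) → ℝ)
    (hu : ∀ x, u x =
      (∑ i : Fin d, ∑ j : Fin d, if i < j then cc i j * x i * x j else 0) +
        ∑ i : Fin d, g i (x i))
    (hb : ∀ x ∈ Set.univ.pi fun _ : Fin d => Set.Icc (0 : ℝ) 1,
      (∃ i, x i = 0 ∨ x i = 1) →
        u x = 0 ∧ ∀ k : Fin d, fderiv ℝ u x (Pi.single k 1) = 0) :
    ∀ x ∈ Set.univ.pi fun _ : Fin d => Set.Icc (0 : ℝ) 1, u x = 0 := by
  have : Nontrivial (Fin d) := Fin.nontrivial_iff_two_le.mpr hd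
  obtain rfl : u = specialForm cc g := funext hu
  exact special_form_vanishing_on_cube_general (by simp) (by simp) fun x hx hx' => (hb x hx hx').1
end
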